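/- Let A be a finite-dimensional left Leibniz algebra over a field F of characteristic zero and let B and C be subinvariant subalgebras of A. Then the subalgebra D generated by B and C is a subinvariant subalgebra of A. -/

import Mathlib

open Submodule

section LeibnizDefs

variable {F : Type*} {A : Type*} [Field F] [AddCommGroup A] [Module F A]

/-- The span of all products `b*c` with `b ∈ B`, `c ∈ C`. -/
def mulSub (mul : A →ₗ[F] A →ₗ[F] A) (B C : Submodule F A) : Submodule F A :=
  Submodule.span F {z : A | ∃ b ∈ B, ∃ c ∈ C, mul b c = z}

/-- `fSub mul B C = B·C + C·B`, the function `f(B,C)`. -/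
def fSub (mul : A →ₗ[F] A →ₗ[F] A) (B C : Submodule F A) : Submodule F A :=
  mulSub mul B C ⊔ mulSub mul C B

/-- `fIter mul B C n = f^{n+1}(B,C)` (so index `0` is `f^1(B,C) = f(B,C)`). -/
def fIter (mul : A →ₗ[F] A →ₗ[F] A) (B C : Submodule F A) : ℕ → Submodule F A
  | 0 => fSub mul B C
  | n + 1 => fSub mul B (fIter mul B C n)

/-- `lcs mul B n = B^{n+1}`, the lower central series (index `0` is `B^1 = B`). -/
def lcs (mul : A →ₗ[F] A →ₗ[F] A) (B : Submodule F A) : ℕ → Submodule F A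
  | 0 => B
  | n + 1 => mulSub mul B (lcs mul B n)

/-- `ds mul B n = B^{(n+1)}`, the derived series (index `0` is `B^{(1)} = B`). -/
def ds (mul : A →ₗ[F] A →ₗ[F] A) (B : Submodule F A) : ℕ → Submodule F A
  | 0 => B
  | n + 1 => mulSub mul (ds mul B n) (ds mul B n)

/-- `B^ω = ⋂_{i ≥ 1} B^i`. -/
def omegaSub (mul : A →ₗ[F] A →ₗ[F] A) (B : Submodule F A) : Submodule F A :=
  ⨅ n, lcs mul B n

/-- `B` is a subalgebra: a subspace closed under multiplication. -/
def IsSubalg (mul : A →ₗ[F] A →ₗ[F] A) (B : Submodule F A) : Prop :=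
  ∀ x ∈ B, ∀ y ∈ B, mul x y ∈ B

/-- `I` is an ideal of the subalgebra `S`: `I ⊆ S` and `xI + Ix ⊆ I` for all `x ∈ S`. -/
def IsIdealIn (mul : A →ₗ[F] A →ₗ[F] A) (I S : Submodule F A) : Prop :=
  I ≤ S ∧ ∀ x ∈ S, ∀ y ∈ I, mul x y ∈ I ∧ mul y x ∈ I

/-- `B` is subinvariant in `S`: there is a chain of subalgebras
`B = c 0 ⊆ c 1 ⊆ ⋯ ⊆ c t = S` with each term an ideal of the next. -/
def IsSubinvariantIn (mul : A →ₗ[F] A →ₗ[F] A) (B S : Submodule F A) : Prop :=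
  ∃ (t : ℕ) (c : ℕ → Submodule F A), c 0 = B ∧ c t = S ∧
    (∀ i ≤ t, IsSubalg mul (c i)) ∧ ∀ i < t, IsIdealIn mul (c i) (c (i + 1))

/-- `B` is nilpotent: `B^m = 0` for some `m`. -/
def IsNilpotentSub (mul : A →ₗ[F] A →ₗ[F] A) (B : Submodule F A) : Prop :=
  ∃ m, lcs mul B m = ⊥

/-- `B` is solvable: `B^{(m)} = 0` for some `m`. -/
def IsSolvableSub (mul : A →ₗ[F] A →ₗ[F] A) (B : Submodule F A) : Prop :=
  ∃ m, ds mul B m = ⊥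

/-- The centralizer `Z_A(B) = {x : xb = 0 = bx for all b ∈ B}`. -/
def centralizerSet (mul : A →ₗ[F] A →ₗ[F] A) (B : Submodule F A) : Set A :=
  {x : A | ∀ b ∈ B, mul x b = 0 ∧ mul b x = 0}

/-- `R` is the radical (the maximal solvable ideal) of the subalgebra `S`. -/
def IsRadicalIn (mul : A →ₗ[F] A →ₗ[F] A) (S R : Submodule F A) : Prop :=
  IsIdealIn mul R S ∧ IsSolvableSub mul R ∧
    ∀ T, IsIdealIn mul T S → IsSolvableSub mul T → T ≤ R

/-- `N` is the nilradical (the maximal nilpotent ideal) of the subalgebra `S`. -/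
def IsNilradicalIn (mul : A →ₗ[F] A →ₗ[F] A) (S N : Submodule F A) : Prop :=
  IsIdealIn mul N S ∧ IsNilpotentSub mul N ∧
    ∀ T, IsIdealIn mul T S → IsNilpotentSub mul T → T ≤ N

/-- `H` is a Cartan subalgebra: a nilpotent self-normalizing subalgebra. -/
def IsCartan (mul : A →ₗ[F] A →ₗ[F] A) (H : Submodule F A) : Prop :=
  IsSubalg mul H ∧ IsNilpotentSub mul H ∧
    ∀ x : A, (∀ h ∈ H, mul x h ∈ H ∧ mul h x ∈ H) → x ∈ H

/-- The subalgebra generated by a set: the smallest subalgebra containing it. -/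
def subalgGen (mul : A →ₗ[F] A →ₗ[F] A) (s : Set A) : Submodule F A :=
  sInf {S : Submodule F A | IsSubalg mul S ∧ s ⊆ (S : Set A)}

end LeibnizDefs

section AssocPart

variable {F V : Type*} [Field F] [AddCommGroup V] [Module F V]

open Polynomial in
lemma nil_of_trace [CharZero F] [FiniteDimensional F V] (x : Module.End F V)
    (h : ∀ e ∈ Algebra.adjoin F {x}, LinearMap.trace F V (x * e) = 0) : IsNilpotent x := by
  have hp : minpoly F x ≠ 0 := minpoly.ne_zero (Algebra.IsIntegral.isIntegral x)
  obtain ⟨q, hq, hnd⟩ := Polynomial.exists_eq_pow_rootMultiplicity_mul_and_not_dvd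
    (minpoly F x) hp 0
  set k := rootMultiplicity 0 (minpoly F x)
  rw [C_0, sub_zero] at hq hnd
  have hcop : IsCoprime (X ^ (k + 1) : F[X]) q :=
    ((irreducible_X.coprime_iff_not_dvd).2 hnd).pow_left
  obtain ⟨u, v, huv⟩ := hcop
  have h0 : x ^ k * aeval x q = 0 := by
    have := minpoly.aeval F x
    rw [hq] at this
    simpa using this
  have h1 : aeval x u * x ^ (k + 1) + aeval x v * aeval x q = 1 := by
    have := congrArg (aeval x) huv
    simpa using this
  have hu : aeval x u ∈ Algebra.adjoin F {x} := aeval_mem_adjoin_singleton F x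
  have hcu : Commute (aeval x u) x := by
    have := Polynomial.commute_X u
    simpa using (this.symm.map (aeval x))
  have hcq : Commute (aeval x q) x := by
    have := Polynomial.commute_X q
    simpa using (this.symm.map (aeval x))
  have huq : Commute (aeval x u) (aeval x q) := (Commute.all u q).map (aeval x)
  have hvq : Commute (aeval x v) (aeval x q) := (Commute.all v q).map (aeval x)
  clear_value k
  generalize aeval x u = U at *
  generalize aeval x v = W at *
  generalize aeval x q = Q at *
  have hqe : Q * (U * x ^ (k + 1)) = 0 := by
    rw [← mul_assoc, ← huq.eq, mul_assoc, (hcq.pow_right (k + 1)).eq, pow_succ', mul_assoc, h0,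
      mul_zero, mul_zero]
  have hid : IsIdempotentElem (U * x ^ (k + 1)) := by
    have : (U * x ^ (k + 1) + W * Q) * (U * x ^ (k + 1)) = U * x ^ (k + 1) := by rw [h1, one_mul]
    rw [add_mul, mul_assoc W, hqe, mul_zero, add_zero] at this
    exact this
  have htr : LinearMap.trace F V (U * x ^ (k + 1)) = 0 := by
    have : U * x ^ (k + 1) = x * (U * x ^ k) := by
      rw [pow_succ', ← mul_assoc, hcu.eq, mul_assoc]
    rw [this]
    exact h _ (mul_mem hu (pow_mem (Algebra.self_mem_adjoin_singleton F x) k))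
  have hz : U * x ^ (k + 1) = 0 := LinearMap.IsIdempotentElem.eq_zero_of_trace_eq_zero hid htr
  refine ⟨k, ?_⟩
  rw [hz, zero_add, hvq.eq] at h1
  rw [← mul_one (x ^ k), ← h1, ← mul_assoc, h0, zero_mul]

lemma pow_bot_of_nil [FiniteDimensional F V] (J : Submodule F (Module.End F V))
    (hm : ∀ x ∈ J, ∀ y ∈ J, x * y ∈ J) (hn : ∀ x ∈ J, IsNilpotent x) : ∃ n, J ^ n = ⊥ := by
  let _ : LieRing (Module.End F V) := LieRing.ofAssociativeRing
  let K : LieSubalgebra F (Module.End F V) :=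
    { J with
      lie_mem' := by
        intro x y hx hy
        exact J.sub_mem (hm x hx y hy) (hm y hy x hx) }
  have hK : LieModule.IsNilpotent K V := by
    rw [LieModule.isNilpotent_iff_forall' (R := F)]
    rintro ⟨x, hx⟩
    exact hn x hx
  obtain ⟨n, hn⟩ := LieModule.IsNilpotent.nilpotent F K V
  refine ⟨n, ?_⟩
  have key : ∀ k, ∀ x ∈ J ^ k, ∀ v : V, x v ∈ LieModule.lowerCentralSeries F K V k := by
    intro k
    induction k with
    | zero => intro x _ v; simp
    | succ k ih =>
      intro x hx v
      rw [pow_succ'] at hx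
      induction hx using Submodule.mul_induction_on' with
      | mem_mul_mem a ha b hb =>
        rw [LieModule.lowerCentralSeries_succ]
        exact LieSubmodule.lie_mem_lie (x := (⟨a, ha⟩ : K)) (LieSubmodule.mem_top _) (ih b hb v)
      | add a _ b _ iha ihb => exact add_mem iha ihb
  rw [eq_bot_iff]
  intro x hx
  rw [Submodule.mem_bot]
  ext v
  have := key n x hx v
  rw [hn] at this
  simpa using this

lemma E_mul_J (s : Set (Module.End F V)) (J : Submodule F (Module.End F V))
    (h : ∀ a ∈ s, ∀ j ∈ J, a * j ∈ J * Subalgebra.toSubmodule (Algebra.adjoin F s)) :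
    Subalgebra.toSubmodule (Algebra.adjoin F s) * J ≤
      J * Subalgebra.toSubmodule (Algebra.adjoin F s) := by
  set E := Subalgebra.toSubmodule (Algebra.adjoin F s) with hE
  have hEE : E * E ≤ E := by rw [Submodule.mul_le]; intro x hx y hy; exact mul_mem (S := Subalgebra F _) hx hy
  have hJ : J ≤ J * E := by
    intro j hj
    have := Submodule.mul_mem_mul hj (show (1 : Module.End F V) ∈ E from one_mem (Algebra.adjoin F s))
    rwa [mul_one] at this
  rw [Submodule.mul_le]
  intro e he
  change e ∈ Algebra.adjoin F s at he
  induction he using Algebra.adjoin_induction with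
  | mem x hx => exact h x hx
  | algebraMap r =>
    intro j hj
    rw [← Algebra.smul_def]
    exact Submodule.smul_mem _ _ (hJ hj)
  | add x y _ _ ihx ihy =>
    intro j hj
    rw [add_mul]; exact add_mem (ihx j hj) (ihy j hj)
  | mul x y _ _ ihx ihy =>
    intro j hj
    have h1 : ∀ z ∈ J * E, x * z ∈ J * E := by
      intro z hz
      induction hz using Submodule.mul_induction_on' with
      | mem_mul_mem a ha b hb =>
        rw [← mul_assoc]
        have := Submodule.mul_mem_mul (ihx a ha) hb
        rw [mul_assoc J] at this
        exact mul_le_mul' le_rfl hEE this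
      | add a _ b _ iha ihb => rw [mul_add]; exact add_mem iha ihb
    rw [mul_assoc]
    exact h1 _ (ihy j hj)

lemma trace_zero_of_nil (E J : Submodule F (Module.End F V)) (hEE : E * E ≤ E)
    (h : E * J ≤ J * E) {n : ℕ} (hn : J ^ n = ⊥) :
    ∀ j ∈ J, ∀ e ∈ E, LinearMap.trace F V (j * e) = 0 := by
  have key : ∀ k, (J * E) ^ (k + 1) ≤ J ^ (k + 1) * E := by
    intro k
    induction k with
    | zero => simp
    | succ k ih =>
      calc (J * E) ^ (k + 1 + 1) = (J * E) ^ (k + 1) * (J * E) := pow_succ _ _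
        _ ≤ (J ^ (k + 1) * E) * (J * E) := mul_le_mul' ih le_rfl
        _ = J ^ (k + 1) * (E * J) * E := by simp only [mul_assoc]
        _ ≤ J ^ (k + 1) * (J * E) * E := mul_le_mul' (mul_le_mul' le_rfl h) le_rfl
        _ = J ^ (k + 1 + 1) * (E * E) := by rw [pow_succ J (k + 1)]; simp only [mul_assoc]
        _ ≤ _ := mul_le_mul' le_rfl hEE
  intro j hj e he
  have h1 : (j * e) ^ (n + 1) ∈ (J * E) ^ (n + 1) :=
    Submodule.pow_mem_pow _ (Submodule.mul_mem_mul hj he) _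
  have h2 := key n h1
  rw [pow_succ, hn, Submodule.bot_mul, Submodule.bot_mul, Submodule.mem_bot] at h2
  exact (LinearMap.isNilpotent_trace_of_isNilpotent ⟨_, h2⟩).eq_zero

/-- The trace radical of a subalgebra. -/
def trRad (E : Subalgebra F (Module.End F V)) : Submodule F (Module.End F V) where
  carrier := {x | x ∈ E ∧ ∀ e ∈ E, LinearMap.trace F V (x * e) = 0}
  zero_mem' := ⟨zero_mem _, by simp⟩
  add_mem' := by
    rintro x y ⟨hx, hx'⟩ ⟨hy, hy'⟩
    exact ⟨add_mem hx hy, fun e he => by rw [add_mul, map_add, hx' e he, hy' e he, add_zero]⟩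
  smul_mem' := by
    rintro r x ⟨hx, hx'⟩
    exact ⟨E.smul_mem hx r, fun e he => by rw [smul_mul_assoc, map_smul, hx' e he, smul_zero]⟩

lemma trRad_pow [CharZero F] [FiniteDimensional F V] (E : Subalgebra F (Module.End F V)) :
    ∃ n, trRad E ^ n = ⊥ := by
  apply pow_bot_of_nil
  · rintro x ⟨hx, hx'⟩ y ⟨hy, _⟩
    exact ⟨mul_mem hx hy, fun e he => by rw [mul_assoc]; exact hx' _ (mul_mem hy he)⟩
  · rintro x ⟨hx, hx'⟩
    apply nil_of_trace
    intro e he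
    exact hx' e (Algebra.adjoin_le (by simpa using hx) he)

lemma comm_adjoin (s : Set (Module.End F V)) (a : Module.End F V)
    (h : ∀ b ∈ s, a * b - b * a ∈ Algebra.adjoin F s) :
    ∀ e ∈ Algebra.adjoin F s, a * e - e * a ∈ Algebra.adjoin F s := by
  intro e he
  induction he using Algebra.adjoin_induction with
  | mem x hx => exact h x hx
  | algebraMap r => rw [Algebra.commutes, sub_self]; exact zero_mem _
  | add x y _ _ ihx ihy =>
    have : a * (x + y) - (x + y) * a = (a * x - x * a) + (a * y - y * a) := by noncomm_ring
    rw [this]; exact add_mem ihx ihy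
  | mul x y hx hy ihx ihy =>
    have : a * (x * y) - (x * y) * a = (a * x - x * a) * y + x * (a * y - y * a) := by noncomm_ring
    rw [this]; exact add_mem (mul_mem ihx hy) (mul_mem hx ihy)

lemma trace_comm_zero (E : Subalgebra F (Module.End F V)) (a x : Module.End F V)
    (ha : ∀ e ∈ E, a * e - e * a ∈ E)
    (hx : ∀ e ∈ E, LinearMap.trace F V (x * e) = 0) :
    ∀ e ∈ E, LinearMap.trace F V ((a * x - x * a) * e) = 0 := by
  intro e he
  have h1 : (a * x - x * a) * e = (a * (x * e) - (x * e) * a) - x * (a * e - e * a) := by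
    noncomm_ring
  rw [h1, map_sub, map_sub, LinearMap.trace_mul_comm F a (x * e), sub_self, hx _ (ha e he), sub_zero]

lemma trace_step [CharZero F] [FiniteDimensional F V] (s s' T : Set (Module.End F V))
    (hTs : T ⊆ s)
    (hcom : ∀ a ∈ s', ∀ b ∈ s, a * b - b * a ∈ s)
    (h : ∀ x ∈ T, ∀ e ∈ Algebra.adjoin F s, LinearMap.trace F V (x * e) = 0) :
    ∀ x ∈ T, ∀ e ∈ Algebra.adjoin F s', LinearMap.trace F V (x * e) = 0 := by
  obtain ⟨n, hn⟩ := trRad_pow (Algebra.adjoin F s)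
  intro x hx e he
  refine trace_zero_of_nil (Subalgebra.toSubmodule (Algebra.adjoin F s'))
    (trRad (Algebra.adjoin F s)) ?_ ?_ hn x ⟨Algebra.subset_adjoin (hTs hx), h x hx⟩ e he
  · rw [Submodule.mul_le]; intro x hx y hy; exact mul_mem (S := Subalgebra F _) hx hy
  · apply E_mul_J
    intro a ha j hj
    have hc := comm_adjoin s a (fun b hb => Algebra.subset_adjoin (hcom a ha b hb))
    have h1 : a * j = j * a + (a * j - j * a) * 1 := by noncomm_ring
    rw [h1]
    refine add_mem (Submodule.mul_mem_mul hj (Algebra.subset_adjoin ha))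
      (Submodule.mul_mem_mul ⟨hc j hj.1, trace_comm_zero _ a j hc hj.2⟩ (one_mem (Algebra.adjoin F s')))

lemma trace_base (S : Submodule F (Module.End F V)) {n : ℕ} (hn : S ^ n = ⊥) :
    ∀ x ∈ S, ∀ e ∈ Algebra.adjoin F (S : Set (Module.End F V)),
      LinearMap.trace F V (x * e) = 0 := by
  refine trace_zero_of_nil (Subalgebra.toSubmodule (Algebra.adjoin F (S : Set (Module.End F V)))) S
    ?_ ?_ hn
  · rw [Submodule.mul_le]; intro x hx y hy; exact mul_mem (S := Subalgebra F _) hx hy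
  · apply E_mul_J
    intro a ha j hj
    exact Submodule.mul_mem_mul ha (Algebra.subset_adjoin hj)

end AssocPart

section LeibnizPart

variable {F A : Type*} [Field F] [AddCommGroup A] [Module F A]
  (mul : A →ₗ[F] A →ₗ[F] A)

lemma mulSub_mem {B C : Submodule F A} {b c : A} (hb : b ∈ B) (hc : c ∈ C) :
    mul b c ∈ mulSub mul B C := Submodule.subset_span ⟨b, hb, c, hc, rfl⟩

lemma mulSub_le {B C P : Submodule F A} (h : ∀ b ∈ B, ∀ c ∈ C, mul b c ∈ P) :
    mulSub mul B C ≤ P := by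
  refine Submodule.span_le.2 ?_
  rintro _ ⟨b, hb, c, hc, rfl⟩
  exact h b hb c hc

lemma lcs_succ_le {B : Submodule F A} (hB : IsSubalg mul B) (n : ℕ) :
    lcs mul B (n + 1) ≤ lcs mul B n := by
  induction n with
  | zero => exact mulSub_le mul hB
  | succ n ih => exact mulSub_le mul fun b hb c hc => mulSub_mem mul hb (ih hc)

lemma lcs_anti {B : Submodule F A} (hB : IsSubalg mul B) : Antitone (lcs mul B) :=
  antitone_nat_of_succ_le (lcs_succ_le mul hB)

lemma lcs_mul_lcs (hleib : ∀ x y z : A, mul x (mul y z) = mul (mul x y) z + mul y (mul x z))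
    (B : Submodule F A) (j : ℕ) : ∀ k, ∀ y ∈ lcs mul B j, ∀ z ∈ lcs mul B k,
      mul y z ∈ lcs mul B (j + k + 1) := by
  induction j with
  | zero => intro k y hy z hz; rw [Nat.zero_add]; exact mulSub_mem mul hy hz
  | succ j ih =>
    intro k y hy z hz
    have : lcs mul B (j + 1) ≤ (lcs mul B (j + 1 + k + 1)).comap (mul.flip z) := by
      refine mulSub_le mul fun b hb c hc => ?_
      have h1 : mul (mul b c) z = mul b (mul c z) - mul c (mul b z) := by rw [hleib b c z]; abel
      rw [Submodule.mem_comap, LinearMap.flip_apply, h1]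
      refine Submodule.sub_mem _ ?_ ?_
      · have := mulSub_mem mul hb (ih k c hc z hz)
        rwa [show j + 1 + k + 1 = (j + k + 1) + 1 by ring]
      · have := ih (k + 1) c hc (mul b z) (mulSub_mem mul hb hz)
        rwa [show j + 1 + k + 1 = j + (k + 1) + 1 by ring]
    exact this hy

lemma filt (hleib : ∀ x y z : A, mul x (mul y z) = mul (mul x y) z + mul y (mul x z))
    (B : Submodule F A) (U : ℕ → Submodule F A)
    (hU : ∀ i, ∀ b ∈ B, ∀ u ∈ U i, mul b u ∈ U (i + 1) ∧ mul u b ∈ U (i + 1)) (k : ℕ) :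
    ∀ i, ∀ y ∈ lcs mul B k, ∀ u ∈ U i, mul y u ∈ U (i + k + 1) ∧ mul u y ∈ U (i + k + 1) := by
  induction k with
  | zero => exact hU
  | succ k ih =>
    intro i y hy u hu
    have e1 : i + (k + 1) + 1 = (i + k + 1) + 1 := by ring
    have e2 : i + (k + 1) + 1 = (i + 1) + k + 1 := by ring
    have h1 : lcs mul B (k + 1) ≤ (U (i + (k + 1) + 1)).comap (mul.flip u) := by
      refine mulSub_le mul fun b hb c hc => ?_
      have h1 : mul (mul b c) u = mul b (mul c u) - mul c (mul b u) := by rw [hleib b c u]; abel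
      rw [Submodule.mem_comap, LinearMap.flip_apply, h1]
      refine Submodule.sub_mem _ ?_ ?_
      · rw [e1]; exact (hU _ b hb _ (ih i c hc u hu).1).1
      · rw [e2]; exact (ih _ c hc _ (hU i b hb u hu).1).1
    have h2 : lcs mul B (k + 1) ≤ (U (i + (k + 1) + 1)).comap (mul u) := by
      refine mulSub_le mul fun b hb c hc => ?_
      rw [Submodule.mem_comap, hleib u b c]
      refine Submodule.add_mem _ ?_ ?_
      · rw [e2]; exact (ih _ c hc _ (hU i b hb u hu).2).2
      · rw [e1]; exact (hU _ b hb _ (ih i c hc u hu).2).1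
    exact ⟨h1 hy, h2 hy⟩

lemma prep [FiniteDimensional F A]
    (hleib : ∀ x y z : A, mul x (mul y z) = mul (mul x y) z + mul y (mul x z))
    (B : Submodule F A) (hB : IsSubinvariantIn mul B ⊤) :
    ∃ n, lcs mul B n ≤ B ∧ IsIdealIn mul (lcs mul B n) ⊤ ∧ ∃ U : ℕ → Submodule F A, U 0 = ⊤ ∧
      (∀ i, ∀ b ∈ B, ∀ u ∈ U i, mul b u ∈ U (i + 1)) ∧ ∃ K, U K ≤ lcs mul B n := by
  obtain ⟨t, c, hc0, hct, hsub, hid⟩ := hB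
  have hBs : IsSubalg mul B := hc0 ▸ hsub 0 (Nat.zero_le _)
  have hle : ∀ i ≤ t, B ≤ c i := by
    intro i
    induction i with
    | zero => intro _; rw [hc0]
    | succ i ih => intro h; exact (ih (by omega)).trans (hid i (by omega)).1
  obtain ⟨n, hn⟩ := IsArtinian.monotone_stabilizes (R := F) (M := A)
    ⟨fun n => OrderDual.toDual (lcs mul B n), fun a b h => lcs_anti mul hBs h⟩
  replace hn : ∀ m, n ≤ m → lcs mul B n = lcs mul B m := hn
  let U : ℕ → Submodule F A := fun i => if i < t then c (t - i) else lcs mul B (i - t)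
  have hU : ∀ i, ∀ b ∈ B, ∀ u ∈ U i, mul b u ∈ U (i + 1) ∧ mul u b ∈ U (i + 1) := by
    intro i b hb u hu
    by_cases h : i < t
    · have hUi : U i = c (t - i) := if_pos h
      have hUi1 : U (i + 1) = c (t - i - 1) := by
        by_cases h' : i + 1 < t
        · simp only [U, if_pos h', Nat.sub_sub]
        · have : i + 1 = t := by omega
          simp only [U, Nat.sub_sub, this, Nat.sub_self, hc0, lt_irrefl, if_false]
          rfl
      rw [hUi1]
      rw [hUi] at hu
      have := (hid (t - i - 1) (by omega)).2 u (by rwa [show t - i - 1 + 1 = t - i by omega]) b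
        (hle _ (by omega) hb)
      exact ⟨this.2, this.1⟩
    · have hUi : U i = lcs mul B (i - t) := if_neg h
      have hUi1 : U (i + 1) = lcs mul B (i - t + 1) := by
        simp only [U, if_neg (show ¬ i + 1 < t by omega)]
        rw [show i + 1 - t = i - t + 1 by omega]
      rw [hUi] at hu
      rw [hUi1]
      exact ⟨mulSub_mem mul hb hu, lcs_mul_lcs mul hleib B (i - t) 0 u hu b hb⟩
  have hU0 : U 0 = ⊤ := by
    by_cases h : 0 < t
    · simp only [U, if_pos h, Nat.sub_zero, hct]
    · have : t = 0 := by omega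
      subst this
      rw [← hct, hc0]
      rfl
  have hUK : ∀ K, t + n ≤ K → U K = lcs mul B n := by
    intro K hK
    simp only [U, if_neg (show ¬ K < t by omega)]
    exact (hn _ (by omega)).symm
  refine ⟨n, lcs_anti mul hBs (Nat.zero_le n), ⟨le_top, ?_⟩, U, hU0,
    fun i b hb u hu => (hU i b hb u hu).1, t + n, (hUK _ le_rfl).le⟩
  intro x _ y hy
  rw [hn (t + n) (by omega)] at hy
  have := filt mul hleib B U hU (t + n) 0 y hy x (by rw [hU0]; trivial)
  rw [hUK _ (by omega)] at this
  exact ⟨this.2, this.1⟩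

lemma exists_rho (I : Submodule F A) (hI : IsIdealIn mul I ⊤) :
    ∃ ρ : A →ₗ[F] Module.End F (A ⧸ I), ∀ a b, ρ a (I.mkQ b) = I.mkQ (mul a b) := by
  have h : ∀ a, I ≤ I.comap (mul a) := fun a y hy => (hI.2 a trivial y hy).1
  refine ⟨{ toFun := fun a => I.mapQ I (mul a) (h a), map_add' := ?_, map_smul' := ?_ }, ?_⟩
  · intro a b
    ext x
    simp
  · intro r a
    ext x
    simp
  · intro a b
    rfl

lemma extend {D D' : Submodule F A} (h : IsIdealIn mul D D')
    (hD' : IsSubinvariantIn mul D' ⊤) : IsSubinvariantIn mul D ⊤ := by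
  obtain ⟨t, c, hc0, hct, hsub, hid⟩ := hD'
  refine ⟨t + 1, fun i => Nat.casesOn i D c, rfl, hct, ?_, ?_⟩
  · rintro (_ | i) hi
    · exact fun x hx y hy => (h.2 x (h.1 hx) y hy).1
    · exact hsub i (by omega)
  · rintro (_ | i) hi
    · change IsIdealIn mul D (c 0)
      rw [hc0]; exact h
    · exact hid i (by omega)

lemma sub_of_nil (hleib : ∀ x y z : A, mul x (mul y z) = mul (mul x y) z + mul y (mul x z))
    (N D : Submodule F A) (hN : IsIdealIn mul N ⊤) (hDN : D ≤ N) (hD : IsSubalg mul D)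
    (k : ℕ) : IsSubinvariantIn mul (D ⊔ lcs mul N k) ⊤ := by
  have hNs : IsSubalg mul N := fun x _ y hy => (hN.2 x trivial y hy).1
  induction k with
  | zero =>
    have : D ⊔ lcs mul N 0 = N := sup_eq_right.2 hDN
    rw [this]
    exact extend mul hN ⟨0, fun _ => ⊤, rfl, rfl, fun _ _ _ _ _ _ => trivial, fun i hi => by omega⟩
  | succ k ih =>
    refine extend mul ⟨sup_le_sup_left (lcs_succ_le mul hNs k) D, ?_⟩ ih
    have hlN : ∀ k, lcs mul N k ≤ N := fun k => lcs_anti mul hNs (Nat.zero_le k)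
    have hl : ∀ n ∈ N, ∀ y ∈ lcs mul N k, mul n y ∈ lcs mul N (k + 1) :=
      fun n hn y hy => mulSub_mem mul hn hy
    have hr : ∀ n ∈ N, ∀ y ∈ lcs mul N k, mul y n ∈ lcs mul N (k + 1) :=
      fun n hn y hy => lcs_mul_lcs mul hleib N k 0 y hy n hn
    intro x hx z hz
    obtain ⟨d, hd, y, hy, rfl⟩ := Submodule.mem_sup.1 hx
    obtain ⟨d', hd', w, hw, rfl⟩ := Submodule.mem_sup.1 hz
    have hw' := lcs_succ_le mul hNs k hw
    have hx' : d + y ∈ N := N.add_mem (hDN hd) (hlN k hy)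
    constructor
    · have : mul (d + y) (d' + w) = mul d d' + (mul y d' + mul (d + y) w) := by
        simp only [map_add, LinearMap.add_apply]; abel
      rw [this]
      exact Submodule.add_mem_sup (hD d hd d' hd')
        (add_mem (hr _ (hDN hd') y hy) (hl _ hx' w hw'))
    · have : mul (d' + w) (d + y) = mul d' d + (mul d' y + mul w (d + y)) := by
        simp only [map_add, LinearMap.add_apply]; abel
      rw [this]
      exact Submodule.add_mem_sup (hD d' hd' d hd)
        (add_mem (hl _ (hDN hd') y hy) (hr _ hx' w hw'))

lemma B_trace [CharZero F] [FiniteDimensional F A] (I : Submodule F A)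
    (ρ : A →ₗ[F] Module.End F (A ⧸ I)) (hρ : ∀ a b, ρ a (I.mkQ b) = I.mkQ (mul a b))
    (hcom : ∀ a b, ρ (mul a b) = ρ a * ρ b - ρ b * ρ a)
    (B : Submodule F A) (hB : IsSubinvariantIn mul B ⊤)
    (U : ℕ → Submodule F A) (hU0 : U 0 = ⊤)
    (hU : ∀ i, ∀ b ∈ B, ∀ u ∈ U i, mul b u ∈ U (i + 1)) (K : ℕ) (hK : U K ≤ I) :
    ∀ b ∈ B, ∀ e ∈ Algebra.adjoin F (Set.range ρ), LinearMap.trace F (A ⧸ I) (ρ b * e) = 0 := by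
  have hpow : ∀ k, ∀ x ∈ (B.map ρ) ^ k, ∀ v, x v ∈ (U k).map I.mkQ := by
    intro k
    induction k with
    | zero =>
      intro x _ v
      rw [hU0, Submodule.map_top, Submodule.range_mkQ]; trivial
    | succ k ih =>
      intro x hx v
      rw [pow_succ'] at hx
      induction hx using Submodule.mul_induction_on' with
      | mem_mul_mem a ha y hy =>
        obtain ⟨b, hb, rfl⟩ := ha
        obtain ⟨u, hu, hu'⟩ := ih y hy v
        rw [Module.End.mul_apply, ← hu', hρ]
        exact Submodule.mem_map_of_mem (hU k b hb u hu)
      | add a _ b _ iha ihb => exact add_mem iha ihb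
  have hbot : (B.map ρ) ^ K = ⊥ := by
    rw [eq_bot_iff]
    intro x hx
    rw [Submodule.mem_bot]
    refine LinearMap.ext fun v => ?_
    obtain ⟨u, hu, hu'⟩ := hpow K x hx v
    rw [← hu', LinearMap.zero_apply, Submodule.mkQ_apply, Submodule.Quotient.mk_eq_zero]
    exact hK hu
  obtain ⟨t, c, hc0, hct, hsub, hid⟩ := hB
  have hle : ∀ i ≤ t, B ≤ c i := by
    intro i
    induction i with
    | zero => intro _; rw [hc0]
    | succ i ih => intro h; exact (ih (by omega)).trans (hid i (by omega)).1
  have main : ∀ i ≤ t, ∀ x ∈ ρ '' (B : Set A), ∀ e ∈ Algebra.adjoin F (ρ '' (c i : Set A)),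
      LinearMap.trace F (A ⧸ I) (x * e) = 0 := by
    intro i
    induction i with
    | zero =>
      intro _
      rw [hc0]
      exact trace_base (B.map ρ) hbot
    | succ i ih =>
      intro hi
      refine trace_step (ρ '' (c i : Set A)) _ _ (Set.image_mono (hle i (by omega))) ?_ (ih (by omega))
      rintro _ ⟨a, ha, rfl⟩ _ ⟨b, hb, rfl⟩
      exact ⟨mul a b, ((hid i (by omega)).2 a ha b hb).1, hcom a b⟩
  intro b hb e he
  refine main t le_rfl (ρ b) ⟨b, hb, rfl⟩ e ?_
  rw [hct]
  simpa using he

end LeibnizPart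


/-- over characteristic zero, the subalgebra generated by two
subinvariant subalgebras is subinvariant. -/
theorem stmt_17 {F A : Type*} [Field F] [CharZero F]
    [AddCommGroup A] [Module F A] [FiniteDimensional F A]
    (mul : A →ₗ[F] A →ₗ[F] A)
    (hleib : ∀ x y z : A, mul x (mul y z) = mul (mul x y) z + mul y (mul x z))
    (B C : Submodule F A)
    (hB : IsSubinvariantIn mul B ⊤) (hC : IsSubinvariantIn mul C ⊤) :
    IsSubinvariantIn mul (subalgGen mul ((B : Set A) ∪ (C : Set A))) ⊤ := by
  obtain ⟨n, hnB, hIB, U, hU0, hU, K, hK⟩ := prep mul hleib B hB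
  obtain ⟨m, hmC, hIC, U', hU0', hU', K', hK'⟩ := prep mul hleib C hC
  set I := lcs mul B n ⊔ lcs mul C m with hIdef
  have hI : IsIdealIn mul I ⊤ := by
    refine ⟨le_top, fun x _ z hz => ?_⟩
    obtain ⟨y, hy, w, hw, rfl⟩ := Submodule.mem_sup.1 hz
    have h1 := hIB.2 x trivial y hy
    have h2 := hIC.2 x trivial w hw
    rw [map_add, map_add, LinearMap.add_apply]
    exact ⟨Submodule.add_mem_sup h1.1 h2.1, Submodule.add_mem_sup h1.2 h2.2⟩
  obtain ⟨ρ, hρ⟩ := exists_rho mul I hI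
  have hcom : ∀ a b, ρ (mul a b) = ρ a * ρ b - ρ b * ρ a := by
    intro a b
    refine LinearMap.ext fun v => ?_
    obtain ⟨x, rfl⟩ := I.mkQ_surjective v
    rw [LinearMap.sub_apply, Module.End.mul_apply, Module.End.mul_apply]
    simp only [hρ]
    rw [hleib a b x, map_add, add_sub_cancel_right]
  have htB := B_trace mul I ρ hρ hcom B hB U hU0 hU K (hK.trans le_sup_left)
  have htC := B_trace mul I ρ hρ hcom C hC U' hU0' hU' K' (hK'.trans le_sup_right)
  set E := Algebra.adjoin F (Set.range ρ) with hE
  have hρE : ∀ a, ρ a ∈ E := fun a => Algebra.subset_adjoin ⟨a, rfl⟩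
  have hEc : ∀ a, ∀ e ∈ E, ρ a * e - e * ρ a ∈ E := fun a e he =>
    sub_mem (mul_mem (hρE a) he) (mul_mem he (hρE a))
  let N : Submodule F A := (trRad E).comap ρ
  have hNmem : ∀ a, a ∈ N ↔ ∀ e ∈ E, LinearMap.trace F (A ⧸ I) (ρ a * e) = 0 :=
    fun a => ⟨fun h => h.2, fun h => ⟨hρE a, h⟩⟩
  have hN : IsIdealIn mul N ⊤ := by
    refine ⟨le_top, fun x _ y hy => ?_⟩
    have h1 := trace_comm_zero E (ρ x) (ρ y) (hEc x) ((hNmem y).1 hy)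
    refine ⟨(hNmem _).2 fun e he => ?_, (hNmem _).2 fun e he => ?_⟩
    · rw [hcom]; exact h1 e he
    · have h2 := h1 e he
      rw [sub_mul, map_sub, sub_eq_zero] at h2
      rw [hcom, sub_mul, map_sub, sub_eq_zero]
      exact h2.symm
  set D := subalgGen mul ((B : Set A) ∪ (C : Set A)) with hDdef
  have hDN : D ≤ N := sInf_le ⟨fun x _ y hy => (hN.2 x trivial y hy).1,
    Set.union_subset (fun b hb => (hNmem b).2 (htB b hb)) (fun c hc => (hNmem c).2 (htC c hc))⟩
  have hD : IsSubalg mul D := by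
    intro x hx y hy
    rw [hDdef, subalgGen, Submodule.mem_sInf] at hx hy ⊢
    exact fun S hS => hS.1 x (hx S hS) y (hy S hS)
  have hBCD : (B : Set A) ∪ (C : Set A) ⊆ D := by
    intro x hx
    rw [SetLike.mem_coe, hDdef, subalgGen, Submodule.mem_sInf]
    exact fun S hS => hS.2 hx
  have hID : I ≤ D := sup_le (hnB.trans (Set.subset_union_left.trans hBCD))
    (hmC.trans (Set.subset_union_right.trans hBCD))
  obtain ⟨r, hr⟩ := trRad_pow E
  have hlcs : ∀ k, ∀ p, p + k = r → ∀ y ∈ lcs mul N k, ∀ x ∈ trRad E ^ p, x (I.mkQ y) = 0 := by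
    intro k
    induction k with
    | zero =>
      intro p hp y _ x hx
      rw [show p = r by omega, hr, Submodule.mem_bot] at hx
      rw [hx, LinearMap.zero_apply]
    | succ k ih =>
      intro p hp y hy x hx
      have : lcs mul N (k + 1) ≤ LinearMap.ker (x ∘ₗ I.mkQ) := by
        refine mulSub_le mul fun a ha z hz => ?_
        rw [LinearMap.mem_ker, LinearMap.comp_apply, ← hρ, ← Module.End.mul_apply]
        refine ih (p + 1) (by omega) z hz _ ?_
        rw [pow_succ]
        exact Submodule.mul_mem_mul hx ha
      exact this hy
  have hNI : lcs mul N r ≤ I := by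
    intro y hy
    have := hlcs r 0 (by omega) y hy 1 (by rw [pow_zero]; exact Submodule.one_le.1 le_rfl)
    rwa [Module.End.one_apply, Submodule.mkQ_apply, Submodule.Quotient.mk_eq_zero] at this
  have := sub_of_nil mul hleib N D hN hDN hD r
  rwa [sup_eq_left.2 (hNI.trans hID)] at this
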